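/- Let β > 1/2 and let X be a random variable distributed on ℝ with the Cauchy-type density f_β(x) = C_β/(1+x²)^β. Then for every 1 ≤ p < ∞ and every smooth function φ on ℝ with E[|φ(X)|^p] finite, E[|φ(X) − E[φ(X)]|^p] ≤ 2^β (2p/(2β−1))^p E[(1+|X|)^p |φ'(X)|^p]. -/

import Mathlib

open MeasureTheory Set

/-!
On a probability space, Jensen and Minkowski show that replacing the mean of `φ` by any constant
costs at most a factor `2` in `L^p`; take the constant `φ 0`. The density `C / (1 + x²)^β` is
comparable to `(1 + |x|)^(-2β)` up to the factor `2^β`, so what remains is the Hardy inequality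
`∫ (∫₀ˣ f)^p x^(-q) dx ≤ (p / (q - 1))^p ∫ (x f)^p x^(-q) dx` on the half-line, with `q = 2β` and
`f = |φ'|` shifted to `(1, ∞)`, used once on each side of the origin. Hardy's inequality itself is
Hölder's inequality against a power weight followed by Tonelli.
-/

open scoped ENNReal

section

variable {α E : Type*} [MeasurableSpace α] {μ : Measure α} [NormedAddCommGroup E] [NormedSpace ℝ E]

theorem rpow_lintegral_le_lintegral_rpow_mul_rpow_lintegral {p : ℝ} (hp : 1 ≤ p)
    {f v : α → ℝ≥0∞} (hf : AEMeasurable f μ) (hv : AEMeasurable v μ)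
    (hv_zero : ∀ᵐ x ∂μ, v x ≠ 0) (hv_top : ∀ᵐ x ∂μ, v x ≠ ∞) :
    (∫⁻ x, f x ∂μ) ^ p ≤ (∫⁻ x, f x ^ p * v x ^ (1 - p) ∂μ) * (∫⁻ x, v x ∂μ) ^ (p - 1) := by
  have hp0 : 0 < p := by linarith
  have hf_eq : ∀ᵐ x ∂μ, f x = (f x ^ p * v x ^ (1 - p)) ^ p⁻¹ * v x ^ (1 - p⁻¹) := by
    filter_upwards [hv_zero, hv_top] with x h0 h1
    rw [ENNReal.mul_rpow_of_nonneg _ _ (by positivity), ENNReal.rpow_rpow_inv hp0.ne',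
      ← ENNReal.rpow_mul, mul_assoc, ← ENNReal.rpow_add _ _ h0 h1,
      show (1 - p) * p⁻¹ + (1 - p⁻¹) = 0 by field_simp; ring, ENNReal.rpow_zero, mul_one]
  calc (∫⁻ x, f x ∂μ) ^ p
      ≤ ((∫⁻ x, f x ^ p * v x ^ (1 - p) ∂μ) ^ p⁻¹ * (∫⁻ x, v x ∂μ) ^ (1 - p⁻¹)) ^ p := by
        rw [lintegral_congr_ae hf_eq]
        gcongr
        exact ENNReal.lintegral_mul_norm_pow_le ((hf.pow_const p).mul (hv.pow_const _)) hv
          (by positivity) (sub_nonneg.2 (inv_le_one_of_one_le₀ hp)) (by ring)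
    _ = _ := by
        rw [ENNReal.mul_rpow_of_nonneg _ _ hp0.le, ENNReal.rpow_inv_rpow hp0.ne',
          ← ENNReal.rpow_mul, sub_mul, inv_mul_cancel₀ hp0.ne', one_mul]

theorem integral_le_mul_integral_of_lintegral_ofReal_le {f g : α → ℝ} {K : ℝ}
    (hK : 0 ≤ K) (hf : ∀ x, 0 ≤ f x) (hg : ∀ x, 0 ≤ g x) (hg_int : Integrable g μ)
    (h : ∫⁻ x, ENNReal.ofReal (f x) ∂μ ≤ ENNReal.ofReal K * ∫⁻ x, ENNReal.ofReal (g x) ∂μ) :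
    ∫ x, f x ∂μ ≤ K * ∫ x, g x ∂μ := by
  rw [← ofReal_integral_eq_lintegral_ofReal hg_int (.of_forall hg), ← ENNReal.ofReal_mul hK] at h
  calc ∫ x, f x ∂μ ≤ (∫⁻ x, ENNReal.ofReal (f x) ∂μ).toReal := by
        simpa only [Real.norm_of_nonneg (hf _)] using
          (Real.le_norm_self _).trans (norm_integral_le_lintegral_norm f)
    _ ≤ K * ∫ x, g x ∂μ := ENNReal.toReal_le_of_le_ofReal (mul_nonneg hK (integral_nonneg hg)) h

variable [CompleteSpace E]

theorem eLpNorm_sub_integral_le [IsProbabilityMeasure μ] {p : ℝ≥0∞} (hp : 1 ≤ p) {f : α → E}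
    (hf : AEStronglyMeasurable f μ) (c : E) :
    eLpNorm (fun x ↦ f x - ∫ y, f y ∂μ) p μ ≤ 2 * eLpNorm (fun x ↦ f x - c) p μ := by
  have hfc : AEStronglyMeasurable (fun x ↦ f x - c) μ := hf.sub aestronglyMeasurable_const
  have h_mean : ‖(∫ y, f y ∂μ) - c‖ₑ ≤ eLpNorm (fun x ↦ f x - c) p μ := by
    refine le_trans ?_ (eLpNorm_le_eLpNorm_of_exponent_le hp hfc)
    rw [eLpNorm_one_eq_lintegral_enorm]
    by_cases hfc_int : Integrable (fun x ↦ f x - c) μ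
    · have hf_int : Integrable f μ := by
        simpa only [sub_eq_add_neg, integrable_add_const_iff] using hfc_int
      calc ‖(∫ y, f y ∂μ) - c‖ₑ = ‖∫ y, (f y - c) ∂μ‖ₑ := by
            rw [integral_sub hf_int (integrable_const c), integral_const, probReal_univ, one_smul]
        _ ≤ ∫⁻ y, ‖f y - c‖ₑ ∂μ := enorm_integral_le_lintegral_enorm _
    · have h_top : ∫⁻ y, ‖f y - c‖ₑ ∂μ = ∞ := not_lt_top_iff.1 fun h ↦ hfc_int ⟨hfc, h⟩
      exact h_top ▸ le_top
  calc eLpNorm (fun x ↦ f x - ∫ y, f y ∂μ) p μ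
      = eLpNorm ((fun x ↦ f x - c) - fun _ ↦ (∫ y, f y ∂μ) - c) p μ := by
        congr 1; ext x; simp
    _ ≤ eLpNorm (fun x ↦ f x - c) p μ + ‖(∫ y, f y ∂μ) - c‖ₑ := by
        refine (eLpNorm_sub_le hfc aestronglyMeasurable_const hp).trans_eq ?_
        rw [eLpNorm_const _ (by positivity) (IsProbabilityMeasure.ne_zero μ), measure_univ,
          ENNReal.one_rpow, mul_one]
    _ ≤ 2 * eLpNorm (fun x ↦ f x - c) p μ := by rw [two_mul]; gcongr

theorem lintegral_enorm_sub_integral_rpow_le [IsProbabilityMeasure μ] {p : ℝ} (hp : 1 ≤ p)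
    {f : α → E} (hf : AEStronglyMeasurable f μ) (c : E) :
    ∫⁻ x, ‖f x - ∫ y, f y ∂μ‖ₑ ^ p ∂μ ≤ 2 ^ p * ∫⁻ x, ‖f x - c‖ₑ ^ p ∂μ := by
  have hp0 : 0 < p := by linarith
  have h := eLpNorm_sub_integral_le (ENNReal.one_le_ofReal.2 hp) hf c
  simp only [eLpNorm_eq_eLpNorm' (ENNReal.ofReal_pos.2 hp0).ne' ENNReal.ofReal_ne_top,
    ENNReal.toReal_ofReal hp0.le] at h
  simp only [lintegral_rpow_enorm_eq_rpow_eLpNorm' hp0, ← ENNReal.mul_rpow_of_nonneg _ _ hp0.le]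
  gcongr

end

theorem lintegral_Ioi_lintegral_Ioo_mul {f g : ℝ → ℝ≥0∞} (hf : Measurable f)
    (hg : Measurable g) (a : ℝ) :
    ∫⁻ x in Ioi a, (∫⁻ t in Ioo a x, f t) * g x = ∫⁻ t in Ioi a, f t * ∫⁻ x in Ioi t, g x := by
  have h_meas : Measurable (Function.uncurry fun x t ↦ (Iio x).indicator (fun t ↦ f t * g x) t) :=
    ((hf.comp measurable_snd).mul (hg.comp measurable_fst)).indicator
      (measurableSet_lt measurable_snd measurable_fst)
  calc ∫⁻ x in Ioi a, (∫⁻ t in Ioo a x, f t) * g x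
      = ∫⁻ x in Ioi a, ∫⁻ t in Ioi a, (Iio x).indicator (fun t ↦ f t * g x) t := by
        refine lintegral_congr fun x ↦ ?_
        rw [lintegral_indicator measurableSet_Iio, Measure.restrict_restrict measurableSet_Iio,
          inter_comm, Ioi_inter_Iio, lintegral_mul_const _ hf]
    _ = ∫⁻ t in Ioi a, ∫⁻ x in Ioi a, (Iio x).indicator (fun t ↦ f t * g x) t :=
        lintegral_lintegral_swap h_meas.aemeasurable
    _ = ∫⁻ t in Ioi a, f t * ∫⁻ x in Ioi t, g x := by
        refine setLIntegral_congr_fun measurableSet_Ioi fun t ht ↦ ?_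
        have h_ind : (fun x ↦ (Iio x).indicator (fun t ↦ f t * g x) t) =
            (Ioi t).indicator fun x ↦ f t * g x := by
          ext x; simp only [indicator_apply, mem_Iio, mem_Ioi]
        rw [h_ind, lintegral_indicator measurableSet_Ioi,
          Measure.restrict_restrict measurableSet_Ioi, Ioi_inter_Ioi, sup_eq_left.2 ht.le,
          lintegral_const_mul _ hg]

theorem lintegral_Ioo_zero_ofReal_rpow_sub_one {s x : ℝ} (hs : 0 < s) (hx : 0 ≤ x) :
    ∫⁻ t in Ioo 0 x, ENNReal.ofReal t ^ (s - 1) =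
      ENNReal.ofReal s⁻¹ * ENNReal.ofReal x ^ s := by
  have h_int : IntegrableOn (fun t : ℝ ↦ t ^ (s - 1)) (Ioo 0 x) :=
    (intervalIntegrable_iff_integrableOn_Ioo_of_le hx).1
      (intervalIntegral.intervalIntegrable_rpow' (by linarith))
  calc ∫⁻ t in Ioo 0 x, ENNReal.ofReal t ^ (s - 1)
      = ∫⁻ t in Ioo 0 x, ENNReal.ofReal (t ^ (s - 1)) :=
        setLIntegral_congr_fun measurableSet_Ioo fun t ht ↦ ENNReal.ofReal_rpow_of_pos ht.1
    _ = ENNReal.ofReal (∫ t in (0 : ℝ)..x, t ^ (s - 1)) := by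
        rw [intervalIntegral.integral_of_le hx, integral_Ioc_eq_integral_Ioo]
        exact (ofReal_integral_eq_lintegral_ofReal h_int <|
          (ae_restrict_mem measurableSet_Ioo).mono fun t ht ↦ Real.rpow_nonneg ht.1.le _).symm
    _ = ENNReal.ofReal (s⁻¹ * x ^ s) := by
        rw [integral_rpow (Or.inl (by linarith)), sub_add_cancel, Real.zero_rpow hs.ne', sub_zero,
          div_eq_inv_mul]
    _ = ENNReal.ofReal s⁻¹ * ENNReal.ofReal x ^ s := by
        rw [ENNReal.ofReal_mul (by positivity), ENNReal.ofReal_rpow_of_nonneg hx hs.le]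

theorem lintegral_Ioi_ofReal_rpow_neg_sub_one {s t : ℝ} (hs : 0 < s) (ht : 0 < t) :
    ∫⁻ x in Ioi t, ENNReal.ofReal x ^ (-s - 1) =
      ENNReal.ofReal s⁻¹ * ENNReal.ofReal t ^ (-s) := by
  calc ∫⁻ x in Ioi t, ENNReal.ofReal x ^ (-s - 1)
      = ∫⁻ x in Ioi t, ENNReal.ofReal (x ^ (-s - 1)) :=
        setLIntegral_congr_fun measurableSet_Ioi fun x hx ↦
          ENNReal.ofReal_rpow_of_pos (ht.trans hx)
    _ = ENNReal.ofReal (∫ x in Ioi t, x ^ (-s - 1)) :=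
        (ofReal_integral_eq_lintegral_ofReal (integrableOn_Ioi_rpow_of_lt (by linarith) ht) <|
          (ae_restrict_mem measurableSet_Ioi).mono fun x hx ↦
            Real.rpow_nonneg (ht.trans hx).le _).symm
    _ = ENNReal.ofReal (s⁻¹ * t ^ (-s)) := by
        rw [integral_Ioi_rpow_of_lt (by linarith) ht, sub_add_cancel, neg_div_neg_eq,
          div_eq_inv_mul]
    _ = ENNReal.ofReal s⁻¹ * ENNReal.ofReal t ^ (-s) := by
        rw [ENNReal.ofReal_mul (by positivity), ENNReal.ofReal_rpow_of_pos ht]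

theorem rpow_lintegral_Ioo_zero_le {p θ x : ℝ} (hp : 1 ≤ p) (hθ : 0 < θ) (hx : 0 ≤ x)
    {f : ℝ → ℝ≥0∞} (hf : Measurable f) :
    (∫⁻ t in Ioo 0 x, f t) ^ p ≤
      (∫⁻ t in Ioo 0 x, f t ^ p * ENNReal.ofReal t ^ ((θ - 1) * (1 - p))) *
        (ENNReal.ofReal θ⁻¹ * ENNReal.ofReal x ^ θ) ^ (p - 1) := by
  simp only [ENNReal.rpow_mul, ← lintegral_Ioo_zero_ofReal_rpow_sub_one hθ hx]
  refine rpow_lintegral_le_lintegral_rpow_mul_rpow_lintegral hp hf.aemeasurable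
    (ENNReal.measurable_ofReal.pow_const _).aemeasurable ?_ ?_ <;>
  filter_upwards [ae_restrict_mem measurableSet_Ioo] with t ht
  · exact (ENNReal.rpow_pos (ENNReal.ofReal_pos.2 ht.1) ENNReal.ofReal_ne_top).ne'
  · exact ENNReal.rpow_ne_top_of_ne_zero (ENNReal.ofReal_pos.2 ht.1).ne' ENNReal.ofReal_ne_top

theorem lintegral_Ioi_rpow_lintegral_Ioo_mul_rpow_neg_le {p q : ℝ} (hp : 1 ≤ p) (hq : 1 < q)
    {f : ℝ → ℝ≥0∞} (hf : Measurable f) :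
    ∫⁻ x in Ioi 0, (∫⁻ t in Ioo 0 x, f t) ^ p * ENNReal.ofReal x ^ (-q) ≤
      ENNReal.ofReal (p / (q - 1)) ^ p *
        ∫⁻ x in Ioi 0, (ENNReal.ofReal x * f x) ^ p * ENNReal.ofReal x ^ (-q) := by
  have hp0 : 0 < p := by linarith
  -- Hölder is applied with the weight `t ^ (θ - 1)`. The resulting constant
  -- `θ⁻¹ ^ (p - 1) / (q - 1 - θ * (p - 1))` is minimal, equal to `θ⁻¹ ^ p`, at this `θ`.
  obtain ⟨θ, hθ⟩ : ∃ θ, θ = (q - 1) / p := ⟨_, rfl⟩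
  have hθ0 : 0 < θ := hθ ▸ div_pos (by linarith) hp0
  have hθp : θ * p = q - 1 := hθ ▸ div_mul_cancel₀ _ hp0.ne'
  rw [← inv_div, ← hθ]
  let u : ℝ → ℝ≥0∞ := ENNReal.ofReal
  let F : ℝ → ℝ≥0∞ := fun t ↦ f t ^ p * u t ^ ((θ - 1) * (1 - p))
  have u_add {t : ℝ} (ht : 0 < t) (r s : ℝ) : u t ^ r * u t ^ s = u t ^ (r + s) :=
    (ENNReal.rpow_add _ _ (ENNReal.ofReal_pos.2 ht).ne' ENNReal.ofReal_ne_top).symm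
  calc ∫⁻ x in Ioi 0, (∫⁻ t in Ioo 0 x, f t) ^ p * u x ^ (-q)
      ≤ ∫⁻ x in Ioi 0, (∫⁻ t in Ioo 0 x, F t) * (u θ⁻¹ ^ (p - 1) * u x ^ (-θ - 1)) := by
        refine setLIntegral_mono' measurableSet_Ioi fun x hx ↦
          (mul_le_mul_left (rpow_lintegral_Ioo_zero_le hp hθ0 hx.le hf) _).trans_eq ?_
        rw [ENNReal.mul_rpow_of_nonneg _ _ (by linarith), ← ENNReal.rpow_mul, mul_assoc,
          mul_assoc, u_add hx, show θ * (p - 1) + -q = -θ - 1 by linear_combination hθp]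
    _ = ∫⁻ t in Ioi 0, F t * ∫⁻ x in Ioi t, u θ⁻¹ ^ (p - 1) * u x ^ (-θ - 1) :=
        lintegral_Ioi_lintegral_Ioo_mul (by fun_prop) (by fun_prop) 0
    _ = ∫⁻ t in Ioi 0, u θ⁻¹ ^ p * ((u t * f t) ^ p * u t ^ (-q)) := by
        refine setLIntegral_congr_fun measurableSet_Ioi fun t ht ↦ ?_
        rw [lintegral_const_mul _ (by fun_prop), lintegral_Ioi_ofReal_rpow_neg_sub_one hθ0 ht,
          ENNReal.mul_rpow_of_nonneg _ _ hp0.le]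
        calc F t * (u θ⁻¹ ^ (p - 1) * (u θ⁻¹ * u t ^ (-θ)))
            = u θ⁻¹ ^ (p - 1) * u θ⁻¹ ^ (1 : ℝ) *
                (f t ^ p * (u t ^ ((θ - 1) * (1 - p)) * u t ^ (-θ))) := by
              rw [ENNReal.rpow_one]; ring
          _ = u θ⁻¹ ^ p * (f t ^ p * (u t ^ p * u t ^ (-q))) := by
              rw [u_add (inv_pos.2 hθ0), sub_add_cancel, u_add ht, u_add ht,
                show (θ - 1) * (1 - p) + -θ = p + -q by linear_combination -hθp]
          _ = u θ⁻¹ ^ p * (u t ^ p * f t ^ p * u t ^ (-q)) := by ring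
    _ = _ := lintegral_const_mul _ (by fun_prop)

theorem lintegral_add_abs_eq_lintegral_Ioi_add_lintegral_Ioi (b : ℝ) (h : ℝ → ℝ → ℝ≥0∞) :
    ∫⁻ x, h x (b + |x|) = (∫⁻ x in Ioi b, h (x - b) x) + ∫⁻ x in Ioi b, h (b - x) x := by
  have h_right : ∫⁻ x in Ioi b, h (x - b) x = ∫⁻ x in Ioi 0, h x (b + x) := by
    simpa using (measurePreserving_sub_right volume b).setLIntegral_comp_preimage_emb
      (MeasurableEquiv.subRight b).measurableEmbedding (fun x ↦ h x (b + x)) (Ioi 0)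
  have h_left : ∫⁻ x in Ioi b, h (b - x) x = ∫⁻ x in Iic 0, h x (b - x) := by
    simpa [setLIntegral_congr Iio_ae_eq_Iic] using
      (Measure.measurePreserving_sub_left volume b).setLIntegral_comp_preimage_emb
        (MeasurableEquiv.subLeft b).measurableEmbedding (fun x ↦ h x (b - x)) (Iio 0)
  rw [h_right, h_left, ← lintegral_add_compl _ (measurableSet_Ioi (a := 0)), compl_Ioi]
  congr 1
  · refine setLIntegral_congr_fun measurableSet_Ioi fun x hx ↦ ?_
    rw [abs_of_pos hx]
  · refine setLIntegral_congr_fun measurableSet_Iic fun x hx ↦ ?_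
    rw [abs_of_nonpos hx, sub_eq_add_neg]

theorem one_add_rpow_neg_two_mul_le {β x : ℝ} (hβ : 0 ≤ β) (hx : 0 ≤ x) :
    (1 + x) ^ (-(2 * β)) ≤ ((1 + x ^ 2) ^ β)⁻¹ := by
  rw [Real.rpow_neg (by positivity), Real.rpow_mul (by positivity), Real.rpow_two]
  gcongr
  nlinarith

theorem inv_one_add_sq_rpow_le {β x : ℝ} (hβ : 0 ≤ β) (hx : 0 ≤ x) :
    ((1 + x ^ 2) ^ β)⁻¹ ≤ 2 ^ β * (1 + x) ^ (-(2 * β)) := by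
  rw [Real.rpow_neg (by positivity), Real.rpow_mul (by positivity), Real.rpow_two, ← div_eq_mul_inv,
    ← one_div, div_le_div_iff₀ (by positivity) (by positivity), one_mul,
    ← Real.mul_rpow (by positivity) (by positivity)]
  gcongr
  nlinarith [sq_nonneg (x - 1)]

section

variable {E : Type*} [NormedAddCommGroup E] [NormedSpace ℝ E] [CompleteSpace E]

theorem enorm_sub_le_lintegral_enorm_deriv {g : ℝ → E} {a b : ℝ} (hab : a ≤ b)
    (hg : ContinuousOn g (Icc a b)) (hg' : DifferentiableOn ℝ g (Ioo a b)) :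
    ‖g b - g a‖ₑ ≤ ∫⁻ t in Ioo a b, ‖deriv g t‖ₑ := by
  by_cases h_top : ∫⁻ t in Ioo a b, ‖deriv g t‖ₑ = ∞
  · exact h_top ▸ le_top
  have h_int : IntegrableOn (deriv g) (Ioo a b) :=
    ⟨(stronglyMeasurable_deriv g).aestronglyMeasurable, lt_top_iff_ne_top.2 h_top⟩
  rw [← intervalIntegral.integral_eq_sub_of_hasDerivAt_of_le hab hg
    (fun x hx ↦ (hg'.differentiableAt (isOpen_Ioo.mem_nhds hx)).hasDerivAt)
    ((intervalIntegrable_iff_integrableOn_Ioo_of_le hab).2 h_int),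
    intervalIntegral.integral_of_le hab, integral_Ioc_eq_integral_Ioo]
  exact enorm_integral_le_lintegral_enorm _

theorem lintegral_Ioi_enorm_sub_rpow_mul_rpow_neg_le {p q b : ℝ} (hp : 1 ≤ p) (hq : 1 < q)
    (hb : 0 ≤ b) {g : ℝ → E} (hg : ContinuousOn g (Ici b)) (hg' : DifferentiableOn ℝ g (Ioi b)) :
    ∫⁻ x in Ioi b, ‖g x - g b‖ₑ ^ p * ENNReal.ofReal x ^ (-q) ≤
      ENNReal.ofReal (p / (q - 1)) ^ p *
        ∫⁻ x in Ioi b, (ENNReal.ofReal x * ‖deriv g x‖ₑ) ^ p * ENNReal.ofReal x ^ (-q) := by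
  have hp0 : 0 < p := by linarith
  let f : ℝ → ℝ≥0∞ := (Ioi b).indicator fun t ↦ ‖deriv g t‖ₑ
  have hf : Measurable f := (stronglyMeasurable_deriv g).enorm.indicator measurableSet_Ioi
  have h_ftc : ∀ x ∈ Ioi b, ‖g x - g b‖ₑ ≤ ∫⁻ t in Ioo 0 x, f t := by
    intro x hx
    rw [lintegral_indicator measurableSet_Ioi, Measure.restrict_restrict measurableSet_Ioi,
      Ioi_inter_Ioo, max_eq_left hb]
    exact enorm_sub_le_lintegral_enorm_deriv hx.le (hg.mono Icc_subset_Ici_self)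
      (hg'.mono Ioo_subset_Ioi_self)
  calc ∫⁻ x in Ioi b, ‖g x - g b‖ₑ ^ p * ENNReal.ofReal x ^ (-q)
      ≤ ∫⁻ x in Ioi b, (∫⁻ t in Ioo 0 x, f t) ^ p * ENNReal.ofReal x ^ (-q) :=
        setLIntegral_mono' measurableSet_Ioi fun x hx ↦ by gcongr; exact h_ftc x hx
    _ ≤ ∫⁻ x in Ioi 0, (∫⁻ t in Ioo 0 x, f t) ^ p * ENNReal.ofReal x ^ (-q) :=
        lintegral_mono_set (Ioi_subset_Ioi hb)
    _ ≤ ENNReal.ofReal (p / (q - 1)) ^ p *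
          ∫⁻ x in Ioi 0, (ENNReal.ofReal x * f x) ^ p * ENNReal.ofReal x ^ (-q) :=
        lintegral_Ioi_rpow_lintegral_Ioo_mul_rpow_neg_le hp hq hf
    _ = _ := by
        have h_ind : (fun x ↦ (ENNReal.ofReal x * f x) ^ p * ENNReal.ofReal x ^ (-q)) =
            (Ioi b).indicator fun x ↦
              (ENNReal.ofReal x * ‖deriv g x‖ₑ) ^ p * ENNReal.ofReal x ^ (-q) := by
          ext x
          by_cases hx : x ∈ Ioi b <;> simp [f, hx, hp0]
        rw [h_ind, lintegral_indicator measurableSet_Ioi,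
          Measure.restrict_restrict measurableSet_Ioi, Ioi_inter_Ioi, sup_eq_left.2 hb]

theorem lintegral_enorm_sub_rpow_mul_rpow_neg_le {p q b : ℝ} (hp : 1 ≤ p) (hq : 1 < q)
    (hb : 0 ≤ b) {φ : ℝ → E} (hφ : Differentiable ℝ φ) :
    ∫⁻ x, ‖φ x - φ 0‖ₑ ^ p * ENNReal.ofReal (b + |x|) ^ (-q) ≤
      ENNReal.ofReal (p / (q - 1)) ^ p *
        ∫⁻ x, (ENNReal.ofReal (b + |x|) * ‖deriv φ x‖ₑ) ^ p *
          ENNReal.ofReal (b + |x|) ^ (-q) := by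
  have h_right := lintegral_Ioi_enorm_sub_rpow_mul_rpow_neg_le hp hq hb
    (g := fun x ↦ φ (x - b)) (hφ.continuous.comp (by fun_prop)).continuousOn
    (hφ.comp (by fun_prop)).differentiableOn
  have h_left := lintegral_Ioi_enorm_sub_rpow_mul_rpow_neg_le hp hq hb
    (g := fun x ↦ φ (b - x)) (hφ.continuous.comp (by fun_prop)).continuousOn
    (hφ.comp (by fun_prop)).differentiableOn
  simp only [deriv_comp_sub_const, deriv_comp_const_sub, sub_self, enorm_neg] at h_left h_right
  rw [lintegral_add_abs_eq_lintegral_Ioi_add_lintegral_Ioi b fun x r ↦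
      ‖φ x - φ 0‖ₑ ^ p * ENNReal.ofReal r ^ (-q),
    lintegral_add_abs_eq_lintegral_Ioi_add_lintegral_Ioi b fun x r ↦
      (ENNReal.ofReal r * ‖deriv φ x‖ₑ) ^ p * ENNReal.ofReal r ^ (-q), mul_add]
  exact add_le_add h_right h_left

theorem lintegral_enorm_sub_rpow_mul_density_le {p q b : ℝ} (hp : 1 ≤ p) (hq : 1 < q)
    (hb : 0 ≤ b) {A B : ℝ≥0∞} {ρ : ℝ → ℝ≥0∞}
    (h_lower : ∀ x, ENNReal.ofReal (b + |x|) ^ (-q) ≤ A * ρ x)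
    (h_upper : ∀ x, ρ x ≤ B * ENNReal.ofReal (b + |x|) ^ (-q)) (hρ : Measurable ρ)
    {φ : ℝ → E} (hφ : Differentiable ℝ φ) :
    ∫⁻ x, ‖φ x - φ 0‖ₑ ^ p * ρ x ≤
      A * B * ENNReal.ofReal (p / (q - 1)) ^ p *
        ∫⁻ x, (ENNReal.ofReal (b + |x|) * ‖deriv φ x‖ₑ) ^ p * ρ x := by
  let w : ℝ → ℝ≥0∞ := fun x ↦ ENNReal.ofReal (b + |x|) ^ (-q)
  have hφ_meas : Measurable fun x ↦ ‖φ x - φ 0‖ₑ :=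
    (hφ.continuous.sub continuous_const).enorm.measurable
  have hφ'_meas : Measurable fun x ↦ ‖deriv φ x‖ₑ := (stronglyMeasurable_deriv φ).enorm
  calc ∫⁻ x, ‖φ x - φ 0‖ₑ ^ p * ρ x
      ≤ ∫⁻ x, B * (‖φ x - φ 0‖ₑ ^ p * w x) := by
        refine lintegral_mono fun x ↦ ?_
        rw [mul_left_comm]
        gcongr
        exact h_upper x
    _ = B * ∫⁻ x, ‖φ x - φ 0‖ₑ ^ p * w x := lintegral_const_mul _ (by fun_prop)
    _ ≤ B * (ENNReal.ofReal (p / (q - 1)) ^ p *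
          ∫⁻ x, (ENNReal.ofReal (b + |x|) * ‖deriv φ x‖ₑ) ^ p * w x) := by
        gcongr
        exact lintegral_enorm_sub_rpow_mul_rpow_neg_le hp hq hb hφ
    _ ≤ B * (ENNReal.ofReal (p / (q - 1)) ^ p *
          ∫⁻ x, A * ((ENNReal.ofReal (b + |x|) * ‖deriv φ x‖ₑ) ^ p * ρ x)) := by
        gcongr _ * (_ * ?_)
        refine lintegral_mono fun x ↦ ?_
        rw [mul_left_comm]
        gcongr
        exact h_lower x
    _ = _ := by
        rw [lintegral_const_mul _ (by fun_prop)]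
        ring

theorem lintegral_enorm_sub_mean_rpow_mul_density_le {p q b : ℝ} (hp : 1 ≤ p) (hq : 1 < q)
    (hb : 0 ≤ b) {A B : ℝ≥0∞} {ρ : ℝ → ℝ≥0∞}
    (h_lower : ∀ x, ENNReal.ofReal (b + |x|) ^ (-q) ≤ A * ρ x)
    (h_upper : ∀ x, ρ x ≤ B * ENNReal.ofReal (b + |x|) ^ (-q)) (hρ : Measurable ρ)
    (hρ_one : ∫⁻ x, ρ x = 1) {φ : ℝ → E} (hφ : Differentiable ℝ φ) :
    ∫⁻ x, ‖φ x - ∫ y, (ρ y).toReal • φ y‖ₑ ^ p * ρ x ≤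
      A * B * ENNReal.ofReal (2 * p / (q - 1)) ^ p *
        ∫⁻ x, (ENNReal.ofReal (b + |x|) * ‖deriv φ x‖ₑ) ^ p * ρ x := by
  have hρ_top : ∀ᵐ x, ρ x < ∞ := ae_lt_top hρ (hρ_one ▸ ENNReal.one_ne_top)
  have : IsProbabilityMeasure (volume.withDensity ρ) :=
    ⟨by rw [withDensity_apply _ .univ, Measure.restrict_univ, hρ_one]⟩
  have h_mean := lintegral_enorm_sub_integral_rpow_le (μ := volume.withDensity ρ) hp
    hφ.continuous.aestronglyMeasurable (φ 0)
  simp only [integral_withDensity_eq_integral_toReal_smul hρ hρ_top,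
    lintegral_withDensity_eq_lintegral_mul_non_measurable _ hρ hρ_top, Pi.mul_apply,
    mul_comm (ρ _)] at h_mean
  calc _ ≤ 2 ^ p * ∫⁻ x, ‖φ x - φ 0‖ₑ ^ p * ρ x := h_mean
    _ ≤ 2 ^ p * (A * B * ENNReal.ofReal (p / (q - 1)) ^ p *
        ∫⁻ x, (ENNReal.ofReal (b + |x|) * ‖deriv φ x‖ₑ) ^ p * ρ x) := by
        gcongr
        exact lintegral_enorm_sub_rpow_mul_density_le hp hq hb h_lower h_upper hρ hφ
    _ = _ := by
        rw [mul_div_assoc, ENNReal.ofReal_mul zero_le_two, ENNReal.ofReal_ofNat,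
          ENNReal.mul_rpow_of_nonneg _ _ (by linarith)]
        ring

theorem integral_norm_sub_mean_rpow_mul_density_le {p q b : ℝ} (hp : 1 ≤ p) (hq : 1 < q)
    (hb : 0 < b) {A B : ℝ} (hA : 0 ≤ A) {ρ : ℝ → ℝ}
    (h_lower : ∀ x, (b + |x|) ^ (-q) ≤ A * ρ x) (h_upper : ∀ x, ρ x ≤ B * (b + |x|) ^ (-q))
    (hρ : Measurable ρ) (hρ_one : ∫ x, ρ x = 1) {φ : ℝ → E} (hφ : Differentiable ℝ φ)
    (hφ' : Integrable fun x ↦ (b + |x|) ^ p * ‖deriv φ x‖ ^ p * ρ x) :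
    ∫ x, ‖φ x - ∫ y, ρ y • φ y‖ ^ p * ρ x ≤
      A * B * (2 * p / (q - 1)) ^ p * ∫ x, (b + |x|) ^ p * ‖deriv φ x‖ ^ p * ρ x := by
  have hp0 : 0 ≤ p := by linarith
  have hw (x : ℝ) : 0 < (b + |x|) ^ (-q) := by positivity
  have hρ0 (x : ℝ) : 0 < ρ x := pos_of_mul_pos_right ((hw x).trans_le (h_lower x)) hA
  have hB : 0 ≤ B := (pos_of_mul_pos_left ((hρ0 0).trans_le (h_upper 0)) (hw 0).le).le
  have hK : 0 ≤ 2 * p / (q - 1) := div_nonneg (by linarith) (by linarith)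
  have hρ_lintegral : ∫⁻ x, ENNReal.ofReal (ρ x) = 1 := by
    rw [← ofReal_integral_eq_lintegral_ofReal (.of_integral_ne_zero (hρ_one ▸ one_ne_zero))
      (.of_forall fun x ↦ (hρ0 x).le), hρ_one, ENNReal.ofReal_one]
  have h_lower_ofReal (x : ℝ) :
      ENNReal.ofReal (b + |x|) ^ (-q) ≤ ENNReal.ofReal A * ENNReal.ofReal (ρ x) := by
    rw [ENNReal.ofReal_rpow_of_pos (by positivity), ← ENNReal.ofReal_mul hA]
    exact ENNReal.ofReal_le_ofReal (h_lower x)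
  have h_upper_ofReal (x : ℝ) :
      ENNReal.ofReal (ρ x) ≤ ENNReal.ofReal B * ENNReal.ofReal (b + |x|) ^ (-q) := by
    rw [ENNReal.ofReal_rpow_of_pos (by positivity), ← ENNReal.ofReal_mul hB]
    exact ENNReal.ofReal_le_ofReal (h_upper x)
  have ofReal_lhs (x : ℝ) (v : E) : ENNReal.ofReal (‖v‖ ^ p * ρ x) =
      ‖v‖ₑ ^ p * ENNReal.ofReal (ρ x) := by
    rw [ENNReal.ofReal_mul (by positivity), ← ENNReal.ofReal_rpow_of_nonneg (norm_nonneg v) hp0,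
      ofReal_norm]
  have ofReal_rhs (x : ℝ) : ENNReal.ofReal ((b + |x|) ^ p * ‖deriv φ x‖ ^ p * ρ x) =
      (ENNReal.ofReal (b + |x|) * ‖deriv φ x‖ₑ) ^ p * ENNReal.ofReal (ρ x) := by
    rw [mul_assoc, ENNReal.ofReal_mul (by positivity), ofReal_lhs,
      ← ENNReal.ofReal_rpow_of_nonneg (by positivity) hp0, ← mul_assoc,
      ENNReal.mul_rpow_of_nonneg _ _ hp0]
  refine integral_le_mul_integral_of_lintegral_ofReal_le (by positivity)
    (fun x ↦ mul_nonneg (by positivity) (hρ0 x).le)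
    (fun x ↦ mul_nonneg (by positivity) (hρ0 x).le) hφ' ?_
  simpa only [ofReal_lhs, ofReal_rhs, ENNReal.toReal_ofReal (hρ0 _).le,
    ENNReal.ofReal_mul (mul_nonneg hA hB), ENNReal.ofReal_mul hA,
    ENNReal.ofReal_rpow_of_nonneg hK hp0] using
    lintegral_enorm_sub_mean_rpow_mul_density_le hp hq hb.le h_lower_ofReal h_upper_ofReal
      hρ.ennreal_ofReal hρ_lintegral hφ

theorem wirtinger_cauchy_type_general {β : ℝ} (hβ : 1 / 2 < β) {C : ℝ} (hC : 0 < C)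
    (hnorm : ∫ x : ℝ, C / (1 + x ^ 2) ^ β = 1) {p : ℝ} (hp : 1 ≤ p) {φ : ℝ → E}
    (hφ : Differentiable ℝ φ)
    (hrhs : Integrable fun x ↦
      (1 + |x|) ^ p * ‖deriv φ x‖ ^ p * (C / (1 + x ^ 2) ^ β)) :
    ∫ x, ‖φ x - ∫ y, (C / (1 + y ^ 2) ^ β) • φ y‖ ^ p * (C / (1 + x ^ 2) ^ β) ≤
      2 ^ β * (2 * p / (2 * β - 1)) ^ p *
        ∫ x, (1 + |x|) ^ p * ‖deriv φ x‖ ^ p * (C / (1 + x ^ 2) ^ β) := by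
  have hβ0 : 0 ≤ β := by linarith
  have h_lower (x : ℝ) : (1 + |x|) ^ (-(2 * β)) ≤ C⁻¹ * (C / (1 + x ^ 2) ^ β) := by
    rw [div_eq_mul_inv, inv_mul_cancel_left₀ hC.ne', ← sq_abs]
    exact one_add_rpow_neg_two_mul_le hβ0 (abs_nonneg x)
  have h_upper (x : ℝ) : C / (1 + x ^ 2) ^ β ≤ C * 2 ^ β * (1 + |x|) ^ (-(2 * β)) := by
    rw [div_eq_mul_inv, mul_assoc, ← sq_abs]
    gcongr
    exact inv_one_add_sq_rpow_le hβ0 (abs_nonneg x)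
  simpa only [inv_mul_cancel_left₀ hC.ne'] using
    integral_norm_sub_mean_rpow_mul_density_le hp (by linarith) one_pos (inv_nonneg.2 hC.le)
      h_lower h_upper (by fun_prop) hnorm hφ hrhs

end

/-- **Wirtinger inequality with weight for Cauchy-type densities** (Theorem 4.2).
Let `β > 1/2` and let `X` have the Cauchy-type density `f_β(x) = C_β/(1+x²)^β`
on `ℝ`. Then for every `1 ≤ p < ∞` and every smooth `φ` with `E[|φ(X)|^p]`
finite,
`E[|φ(X) − E[φ(X)]|^p] ≤ 2^β (2p/(2β−1))^p E[(1+|X|)^p |φ'(X)|^p]`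
(whenever the right-hand side is finite). -/
theorem wirtinger_cauchy_type
    (β : ℝ) (hβ : 1 / 2 < β)
    (C : ℝ) (hC : 0 < C)
    (hnorm : ∫ x : ℝ, C / (1 + x ^ 2) ^ β = 1)
    (p : ℝ) (hp : 1 ≤ p)
    (φ : ℝ → ℝ) (hφ : ContDiff ℝ (⊤ : ℕ∞) φ)
    (hlhs : Integrable (fun x => |φ x| ^ p * (C / (1 + x ^ 2) ^ β)))
    (hrhs : Integrable (fun x =>
      (1 + |x|) ^ p * |deriv φ x| ^ p * (C / (1 + x ^ 2) ^ β))) :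
    (∫ x : ℝ, |φ x - ∫ y : ℝ, φ y * (C / (1 + y ^ 2) ^ β)| ^ p * (C / (1 + x ^ 2) ^ β))
      ≤ (2 : ℝ) ^ β * (2 * p / (2 * β - 1)) ^ p *
          ∫ x : ℝ, (1 + |x|) ^ p * |deriv φ x| ^ p * (C / (1 + x ^ 2) ^ β) := by
  simpa only [smul_eq_mul, mul_comm (C / _), Real.norm_eq_abs] using
    wirtinger_cauchy_type_general hβ hC hnorm hp (hφ.differentiable (by simp)) hrhs
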